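/- Let N ≥ 3 and let C ⊆ ℝ^N be a closed set with tC ⊆ C for every t ≥ 0, such that C ∩ S^{N-1} is (N−2)-rectifiable with H^{N-2}(C ∩ S^{N-1}) < ∞. Let K ⊆ C be a closed set. Then K is (N−1)-rectifiable, and for H^{N-1}-almost every x ∈ K, any (N−1)-dimensional linear subspace P ⊆ ℝ^N that is an approximate tangent plane of K at x contains x (equivalently, ⟨x, ν_x⟩ = 0 for any unit normal ν_x to P). -/

import Mathlib

open MeasureTheory Metric Set Filter
open scoped ENNReal NNReal Topology

noncomputable section

/-- `ℝ^N` as a Euclidean space. -/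
abbrev Rn (N : ℕ) := EuclideanSpace ℝ (Fin N)

/-- `u` is locally Lipschitz on the set `s` (neighborhoods taken within `s`). -/
def LocLipOn (N : ℕ) (u : Rn N → ℝ) (s : Set (Rn N)) : Prop :=
  ∀ x ∈ s, ∃ t ∈ nhdsWithin x s, ∃ C : ℝ≥0, LipschitzOnWith C u t

/-- `E` is `k`-rectifiable: up to an `H^k`-null set, `E` is covered by countably many
Lipschitz images of `ℝ^k`. -/
def KRectifiable (N k : ℕ) (E : Set (Rn N)) : Prop :=
  ∃ f : ℕ → (EuclideanSpace ℝ (Fin k) → Rn N),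
    (∀ i, ∃ C : ℝ≥0, LipschitzWith C (f i)) ∧
    μH[(k : ℝ)] (E \ ⋃ i, Set.range (f i)) = 0

/-- The linear subspace `P` is an approximate tangent plane (for `H^k`, `k = d`) of `S`
at `x`: the rescaled sets `(S - x)/r` converge to `P` weakly-* in the sense of measures
against continuous compactly supported test functions. -/
def ApproxTangentAt (N : ℕ) (d : ℝ) (S : Set (Rn N)) (x : Rn N)
    (P : Submodule ℝ (Rn N)) : Prop :=
  ∀ φ : Rn N → ℝ, Continuous φ → HasCompactSupport φ →
    Tendsto (fun r : ℝ => ∫ y in (fun y => r⁻¹ • (y - x)) '' S, φ y ∂μH[d])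
      (𝓝[>] 0) (𝓝 (∫ y in (P : Set (Rn N)), φ y ∂μH[d]))

/-!
Write `L = C ∩ S^{N-1}`. Up to the origin, `K` lies in the cone over `L`. The cone over a Lipschitz
image of `ℝ^{N-2}` is a countable union of Lipschitz images of `ℝ^{N-1}`, and the cone over an
`H^{N-2}`-null set is `H^{N-1}`-null, so `K` is rectifiable.

For the tangent planes, suppose that `P` is an approximate tangent plane of `K` at `x` with `x ∉ P`,
and choose a linear functional `A` vanishing on `P` with `A x ≠ 0`. Such points `x` are distributed
over countably many pieces on each of which `K` has a uniform lower density bound. If `y` is in the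
piece of `x`, then a ball around `y` of radius comparable to `|y - x|` carries much of `K`, so it
must meet a thin neighbourhood of `x + P`; hence `A (y - x) = o(|y - x|)`. Thus `y - x` is
transverse to the direction of `x`, and radial projection to the sphere shrinks distances from `x`
by at most a constant factor. The projection of the piece lies in `L`, which is `H^{N-1}`-null, so
the piece is `H^{N-1}`-null as well.
-/

open Asymptotics
open scoped Pointwise

section Products

lemma ediam_prod_le {Y Z : Type*} [PseudoEMetricSpace Y] [PseudoEMetricSpace Z] (s : Set Y)
    (t : Set Z) : ediam (s ×ˢ t) ≤ max (ediam s) (ediam t) :=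
  ediam_le fun _ hp _ hq =>
    max_le_max (edist_le_ediam_of_mem hp.1 hq.1) (edist_le_ediam_of_mem hp.2 hq.2)

lemma Ico_subset_biUnion_Icc (a : ℝ) {b : ℝ} (hb : 0 < b) :
    Ico a (a + 1) ⊆ ⋃ j ∈ Finset.range (⌊b⁻¹⌋₊ + 1), Icc (a + j * b) (a + j * b + b) := by
  rintro t ⟨hat, hta⟩
  have hle := Nat.floor_le (a := (t - a) / b) (div_nonneg (sub_nonneg.2 hat) hb.le)
  have hlt := Nat.lt_floor_add_one ((t - a) / b)
  rw [le_div_iff₀ hb] at hle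
  rw [div_lt_iff₀ hb] at hlt
  refine mem_biUnion (x := ⌊(t - a) / b⌋₊) ?_ ⟨by linarith, by linarith⟩
  rw [Finset.coe_range, mem_Iio, Nat.lt_succ_iff, inv_eq_one_div]
  gcongr
  linarith

variable {X : Type*} [EMetricSpace X] {d : ℝ}

lemma pre_Ico_prod_le_of_ediam_le (hd : 0 ≤ d) {δ : ℝ≥0∞} {b : ℝ≥0} (hb : 0 < b) (hb_one : b ≤ 1)
    (hbδ : b ≤ δ) {s : Set X} (hs : ediam s ≤ b) (a : ℝ) :
    OuterMeasure.mkMetric'.pre (fun t : Set (ℝ × X) => ediam t ^ (d + 1)) δ (Ico a (a + 1) ×ˢ s) ≤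
      2 * (b : ℝ≥0∞) ^ d := by
  set ρ := OuterMeasure.mkMetric'.pre (fun t : Set (ℝ × X) => ediam t ^ (d + 1)) δ
  have slab_le (u : ℝ) : ρ (Icc u (u + b) ×ˢ s) ≤ (b : ℝ≥0∞) ^ (d + 1) := by
    have hdiam : ediam (Icc u (u + b) ×ˢ s) ≤ b :=
      (ediam_prod_le _ _).trans (max_le (by simp) hs)
    exact (OuterMeasure.mkMetric'.pre_le (hdiam.trans hbδ)).trans
      (ENNReal.rpow_le_rpow hdiam (by linarith))
  have count_mul_le : ((⌊(b : ℝ)⁻¹⌋₊ + 1 : ℕ) : ℝ≥0∞) * b ≤ 2 := by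
    have hfloor : (⌊(b : ℝ)⁻¹⌋₊ : ℝ) * b ≤ 1 :=
      (le_mul_inv_iff₀ hb).1 ((Nat.floor_le (by positivity)).trans_eq (one_mul _).symm)
    have : ((⌊(b : ℝ)⁻¹⌋₊ + 1 : ℕ) : ℝ≥0) * b ≤ 2 := by
      rw [← NNReal.coe_le_coe] at hb_one ⊢
      push_cast at hb_one ⊢
      linarith
    exact_mod_cast this
  calc ρ (Ico a (a + 1) ×ˢ s)
      ≤ ρ (⋃ j ∈ Finset.range (⌊(b : ℝ)⁻¹⌋₊ + 1), Icc (a + j * b) (a + j * b + b) ×ˢ s) := by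
        refine measure_mono ?_
        simp only [← iUnion_prod_const]
        exact prod_mono_left (Ico_subset_biUnion_Icc a hb)
    _ ≤ ∑ _j ∈ Finset.range (⌊(b : ℝ)⁻¹⌋₊ + 1), (b : ℝ≥0∞) ^ (d + 1) :=
        (measure_biUnion_finset_le _ _).trans (Finset.sum_le_sum fun _ _ => slab_le _)
    _ = (((⌊(b : ℝ)⁻¹⌋₊ + 1 : ℕ) : ℝ≥0∞) * b) * (b : ℝ≥0∞) ^ d := by
        rw [Finset.sum_const, Finset.card_range, nsmul_eq_mul, add_comm d,
          ENNReal.rpow_add _ _ (ENNReal.coe_ne_zero.2 hb.ne') ENNReal.coe_ne_top,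
          ENNReal.rpow_one, mul_assoc]
    _ ≤ 2 * (b : ℝ≥0∞) ^ d := by gcongr

lemma pre_Ico_prod_le (hd : 0 ≤ d) {δ : ℝ≥0∞} {s : Set X} (hs : ediam s < min 1 δ) (a : ℝ) :
    OuterMeasure.mkMetric'.pre (fun t : Set (ℝ × X) => ediam t ^ (d + 1)) δ (Ico a (a + 1) ×ˢ s) ≤
      2 * ediam s ^ d := by
  have hlim : Tendsto (fun b : ℝ≥0∞ => 2 * b ^ d) (𝓝[>] ediam s) (𝓝 (2 * ediam s ^ d)) :=
    (ENNReal.Tendsto.const_mul ENNReal.continuous_rpow_const.continuousAt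
      (Or.inr ENNReal.ofNat_ne_top)).mono_left nhdsWithin_le_nhds
  -- The slabs need positive thickness, so the possibly zero `ediam s` is approached from above.
  have : (𝓝[>] ediam s).NeBot := nhdsGT_neBot_of_exists_gt ⟨_, hs⟩
  refine ge_of_tendsto hlim ?_
  filter_upwards [Ioo_mem_nhdsGT hs] with b ⟨hsb, hb⟩
  obtain ⟨hb_one, hbδ⟩ := lt_min_iff.1 hb
  lift b to ℝ≥0 using hb_one.ne_top
  exact pre_Ico_prod_le_of_ediam_le hd (ENNReal.coe_pos.1 (zero_le.trans_lt hsb))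
    (by exact_mod_cast hb_one.le) hbδ.le hsb.le a

variable [MeasurableSpace X] [BorelSpace X] [SecondCountableTopology X]

lemma hausdorffMeasure_univ_prod_eq_zero (hd : 0 ≤ d) {Z : Set X} (hZ : μH[d] Z = 0) :
    μH[d + 1] ((univ : Set ℝ) ×ˢ Z) = 0 := by
  rw [← iUnion_Ico_intCast ℝ, iUnion_prod_const]
  refine measure_iUnion_null fun a => ?_
  simp only [Measure.hausdorffMeasure, ← OuterMeasure.coe_mkMetric] at hZ ⊢
  rw [OuterMeasure.mkMetric, OuterMeasure.mkMetric'.eq_iSup_nat, OuterMeasure.iSup_apply,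
    ENNReal.iSup_eq_zero]
  intro n
  set ρ := OuterMeasure.mkMetric'.pre (fun t : Set (ℝ × X) => ediam t ^ (d + 1)) (n : ℝ≥0∞)⁻¹
  let ν : OuterMeasure X :=
    OuterMeasure.map Prod.snd (OuterMeasure.restrict (Ico (a : ℝ) (a + 1) ×ˢ univ) ρ)
  have hν (s : Set X) : ν s = ρ (Ico (a : ℝ) (a + 1) ×ˢ s) := by
    rw [OuterMeasure.map_apply, OuterMeasure.restrict_apply, ← univ_prod, prod_inter_prod,
      univ_inter, inter_univ]
  obtain ⟨ε, hε, hεn⟩ := exists_between (show 0 < min 1 (n : ℝ≥0∞)⁻¹ by simp)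
  have hν_le : ν ≤ OuterMeasure.mkMetric ((2 : ℝ≥0∞) • fun r : ℝ≥0∞ => r ^ d) :=
    OuterMeasure.le_mkMetric _ _ ε hε fun s hs =>
      (hν s).trans_le (pre_Ico_prod_le hd (hs.trans_lt hεn) a)
  rw [OuterMeasure.mkMetric_smul _ ENNReal.ofNat_ne_top two_ne_zero] at hν_le
  rw [← hν]
  exact le_antisymm ((hν_le Z).trans_eq (by rw [smul_apply, hZ, smul_zero])) zero_le

end Products

section Cones

lemma exists_lipschitzOnWith_smul_comp {F E : Type*} [SeminormedAddCommGroup F]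
    [SeminormedAddCommGroup E] [NormedSpace ℝ E] {f : F → E} {L : ℝ≥0} (hf : LipschitzWith L f)
    (M : ℝ≥0) :
    ∃ c : ℝ≥0, LipschitzOnWith c (fun p : ℝ × F => p.1 • f p.2) (closedBall 0 M) := by
  refine ⟨M * L + (L * M + ‖f 0‖₊), LipschitzOnWith.of_dist_le_mul ?_⟩
  rintro ⟨t, u⟩ hp ⟨s, v⟩ hq
  rw [mem_closedBall_zero_iff, norm_prod_le_iff] at hp hq
  have hfv : ‖f v‖ ≤ L * M + ‖f 0‖ :=
    calc ‖f v‖ ≤ ‖f v - f 0‖ + ‖f 0‖ := by simpa using norm_add_le (f v - f 0) (f 0)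
      _ ≤ L * ‖v‖ + ‖f 0‖ := by gcongr; simpa [dist_eq_norm] using hf.dist_le_mul v 0
      _ ≤ L * M + ‖f 0‖ := by gcongr; exact hq.2
  have hts : dist t s ≤ dist (t, u) (s, v) := le_max_left _ _
  have huv : dist u v ≤ dist (t, u) (s, v) := le_max_right _ _
  calc dist (t • f u) (s • f v)
      ≤ dist (t • f u) (t • f v) + dist (t • f v) (s • f v) := dist_triangle _ _ _
    _ = ‖t‖ * dist (f u) (f v) + dist t s * ‖f v‖ := by
        rw [dist_smul₀, dist_eq_norm (t • f v), ← sub_smul, norm_smul, dist_eq_norm t s]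
    _ ≤ M * (L * dist (t, u) (s, v)) + dist (t, u) (s, v) * (L * M + ‖f 0‖) := by
        gcongr
        · exact hp.1
        · exact (hf.dist_le_mul u v).trans (by gcongr)
    _ = _ := by push_cast; ring

lemma hausdorffMeasure_univ_smul_eq_zero {E : Type*} [NormedAddCommGroup E] [NormedSpace ℝ E]
    [MeasurableSpace E] [BorelSpace E] [SecondCountableTopology E] {d : ℝ} (hd : 0 ≤ d)
    {Z : Set E} (hZ : μH[d] Z = 0) : μH[d + 1] ((univ : Set ℝ) • Z) = 0 := by
  rw [← image_smul_prod, ← inter_univ (univ ×ˢ Z), ← iUnion_closedBall_nat (0 : ℝ × E),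
    inter_iUnion, image_iUnion]
  refine measure_iUnion_null fun M => ?_
  obtain ⟨c, hc⟩ := exists_lipschitzOnWith_smul_comp (LipschitzWith.id (α := E)) M
  have hnull : μH[d + 1] (univ ×ˢ Z ∩ closedBall (0 : ℝ × E) M) = 0 :=
    measure_mono_null inter_subset_left (hausdorffMeasure_univ_prod_eq_zero hd hZ)
  have hle := (hc.mono inter_subset_right).hausdorffMeasure_image_le (s := univ ×ˢ Z ∩ _)
    (by linarith : 0 ≤ d + 1)
  exact le_antisymm (hle.trans_eq (by rw [NNReal.coe_natCast, hnull, mul_zero])) zero_le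

lemma exists_lipschitzWith_univ_smul_range_subset {k N : ℕ} {f : Rn k → Rn N} {L : ℝ≥0}
    (hf : LipschitzWith L f) :
    ∃ g : ℕ → Rn (k + 1) → Rn N, (∀ M, ∃ c : ℝ≥0, LipschitzWith c (g M)) ∧
      (univ : Set ℝ) • range f ⊆ ⋃ M, range (g M) := by
  let e : Rn (k + 1) ≃L[ℝ] ℝ × Rn k := ContinuousLinearEquiv.ofFinrankEq (by simp [add_comm])
  choose c hc using fun M : ℕ => exists_lipschitzOnWith_smul_comp hf M
  choose G hG hfG using fun M => (hc M).extend_finite_dimension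
  refine ⟨fun M => G M ∘ e, fun M => ⟨_, (hG M).comp e.lipschitz⟩, ?_⟩
  rintro _ ⟨t, -, _, ⟨u, rfl⟩, rfl⟩
  obtain ⟨M, hM⟩ := exists_nat_ge ‖(t, u)‖
  refine mem_iUnion.2 ⟨M, e.symm (t, u), ?_⟩
  calc G M (e (e.symm (t, u))) = G M (t, u) := by rw [e.apply_symm_apply]
    _ = t • f u := (hfG M (mem_closedBall_zero_iff.2 hM)).symm

end Cones

namespace KRectifiable

variable {N k : ℕ} {E F : Set (Rn N)}

lemma of_hausdorffMeasure_diff_eq_zero (hE : KRectifiable N k E)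
    (hFE : μH[(k : ℝ)] (F \ E) = 0) : KRectifiable N k F := by
  obtain ⟨f, hf, hnull⟩ := hE
  refine ⟨f, hf, measure_mono_null ?_ (measure_union_null hFE hnull)⟩
  exact fun x ⟨hxF, hxf⟩ => (em (x ∈ E)).symm.imp (⟨hxF, ·⟩) (⟨·, hxf⟩)

lemma univ_smul (hE : KRectifiable N k E) : KRectifiable N (k + 1) ((univ : Set ℝ) • E) := by
  obtain ⟨f, hf, hnull⟩ := hE
  choose L hL using hf
  choose g hg hfg using fun i => exists_lipschitzWith_univ_smul_range_subset (hL i)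
  refine ⟨fun n => g n.unpair.1 n.unpair.2, fun n => hg _ _, ?_⟩
  rw [Nat.cast_add_one]
  refine measure_mono_null ?_ (hausdorffMeasure_univ_smul_eq_zero k.cast_nonneg hnull)
  rintro _ ⟨⟨t, -, z, hz, rfl⟩, hg_notMem⟩
  refine smul_mem_smul (mem_univ t) ⟨hz, fun hzf => hg_notMem ?_⟩
  obtain ⟨i, hi⟩ := mem_iUnion.1 hzf
  obtain ⟨M, hM⟩ := mem_iUnion.1 (hfg i (smul_mem_smul (mem_univ t) hi))
  exact mem_iUnion.2 ⟨Nat.pair i M, by simpa only [Nat.unpair_pair] using hM⟩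

lemma hausdorffMeasure_eq_zero (hE : KRectifiable N k E) {d : ℝ} (hkd : k < d) :
    μH[d] E = 0 := by
  obtain ⟨f, hf, hnull⟩ := hE
  lift d to ℝ≥0 using k.cast_nonneg.trans hkd.le
  have hrange (i : ℕ) : μH[d] (range (f i)) = 0 := by
    obtain ⟨L, hL⟩ := hf i
    refine hausdorffMeasure_of_dimH_lt (hL.dimH_range_le.trans_lt ?_)
    rw [Real.dimH_univ_eq_finrank, finrank_euclideanSpace_fin]
    exact_mod_cast hkd
  have hdiff : μH[d] (E \ ⋃ i, range (f i)) = 0 :=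
    le_antisymm ((Measure.hausdorffMeasure_mono hkd.le _).trans_eq hnull) zero_le
  refine measure_mono_null ?_ (measure_union_null hdiff (measure_iUnion_null hrange))
  rw [sdiff_union_self]
  exact subset_union_left

end KRectifiable

section Expanding

variable {X Y : Type*} [MetricSpace X] [MeasurableSpace X] [BorelSpace X]
  [MetricSpace Y] [MeasurableSpace Y] [BorelSpace Y] {d : ℝ} {f : X → Y} {S : Set X}

lemma hausdorffMeasure_eq_zero_of_dist_le_mul (hd : 0 ≤ d) {Λ : ℝ≥0}
    (hf : ∀ x ∈ S, ∀ y ∈ S, dist x y ≤ Λ * dist (f x) (f y)) (hS : μH[d] (f '' S) = 0) :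
    μH[d] S = 0 := by
  have hanti : AntilipschitzWith Λ (S.domRestrict f) :=
    AntilipschitzWith.of_le_mul_dist fun x y => hf x x.2 y y.2
  have huniv : μH[d] (univ : Set S) = 0 := by
    have hle := hanti.le_hausdorffMeasure_image hd univ
    rw [image_univ, range_domRestrict, hS, mul_zero] at hle
    exact le_antisymm hle zero_le
  rwa [← (isometry_subtype_coe (s := S)).hausdorffMeasure_image (Or.inl hd), image_univ,
    Subtype.range_coe] at huniv

lemma hausdorffMeasure_eq_zero_of_isBigO_dist [SecondCountableTopology X] (hd : 0 ≤ d)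
    (hf : ∀ x ∈ S, (dist · x) =O[𝓝[S] x] fun y => dist (f y) (f x)) (hS : μH[d] (f '' S) = 0) :
    μH[d] S = 0 := by
  let T (Λ m : ℕ) : Set X :=
    {x ∈ S | ∀ y ∈ S, dist y x < 1 / (m + 1) → dist y x ≤ Λ * dist (f y) (f x)}
  have hT (Λ m : ℕ) : μH[d] (T Λ m) = 0 := by
    refine measure_null_of_locally_null _ fun x _ => ⟨T Λ m ∩ ball x (1 / (m + 1) / 2),
      inter_mem_nhdsWithin _ (ball_mem_nhds x (by positivity)), ?_⟩
    refine hausdorffMeasure_eq_zero_of_dist_le_mul (Λ := Λ) hd ?_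
      (measure_mono_null (image_mono fun y hy => hy.1.1) hS)
    rintro y ⟨⟨hyS, -⟩, hyx⟩ z ⟨⟨-, hzT⟩, hzx⟩
    refine hzT y hyS ((dist_triangle_right y z x).trans_lt ?_)
    linarith [mem_ball.1 hyx, mem_ball.1 hzx]
  refine measure_mono_null ?_ (measure_iUnion_null fun Λ => measure_iUnion_null (hT Λ))
  intro x hx
  obtain ⟨c, hc⟩ := (hf x hx).bound
  obtain ⟨ε, hε, hεc⟩ := Metric.mem_nhdsWithin_iff.1 hc
  obtain ⟨m, hm⟩ := exists_nat_one_div_lt hε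
  obtain ⟨Λ, hΛ⟩ := exists_nat_ge c
  refine mem_iUnion₂.2 ⟨Λ, m, hx, fun y hy hyx => ?_⟩
  have hle : ‖dist y x‖ ≤ c * ‖dist (f y) (f x)‖ := hεc ⟨mem_ball.2 (hyx.trans hm), hy⟩
  rw [Real.norm_of_nonneg dist_nonneg, Real.norm_of_nonneg dist_nonneg] at hle
  exact hle.trans (by gcongr)

end Expanding

lemma isBigO_sub_normalize_sub {E : Type*} [NormedAddCommGroup E] [NormedSpace ℝ E] {x : E}
    {l : Filter E} (hl : l ≤ 𝓝 x) (A : E →L[ℝ] ℝ) (hAx : A x ≠ 0)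
    (hA : (fun y => A (y - x)) =o[l] (· - x)) :
    (· - x) =O[l] fun y => NormedSpace.normalize y - NormedSpace.normalize x := by
  -- The projection along `x` to `ker A` moves `y - x` by `o(y - x)` and does not see radii.
  let π : E →L[ℝ] E := .id ℝ E - A.smulRight ((A x)⁻¹ • x)
  have hπ_apply (z : E) : π z = z - A z • (A x)⁻¹ • x := rfl
  have hπx : π x = 0 := by rw [hπ_apply, smul_inv_smul₀ hAx, sub_self]
  have hπ_normalize : π (NormedSpace.normalize x) = 0 := by
    rw [NormedSpace.normalize, map_smul, hπx, smul_zero]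
  have hπ_sub (y : E) :
      π (y - x) = ‖y‖ • π (NormedSpace.normalize y - NormedSpace.normalize x) := by
    rw [map_sub, map_sub, hπx, hπ_normalize, sub_zero, sub_zero, ← map_smul,
      NormedSpace.norm_smul_normalize]
  have hbdd : (fun y : E => ‖y‖) =O[l] fun _ => (1 : ℝ) :=
    ((continuous_norm.tendsto x).mono_left hl).isBigO_one ℝ
  calc (· - x) =O[l] fun y => π (y - x) := by
        have hsmul : (fun y => A (y - x) • (A x)⁻¹ • x) =o[l] (· - x) :=
          ((ContinuousLinearMap.toSpanSingleton ℝ ((A x)⁻¹ • x)).isBigO_comp _ l).trans_isLittleO hA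
        exact hsmul.right_isBigO_sub
    _ = fun y => ‖y‖ • π (NormedSpace.normalize y - NormedSpace.normalize x) := funext hπ_sub
    _ =O[l] fun y => (1 : ℝ) • (NormedSpace.normalize y - NormedSpace.normalize x) :=
        hbdd.smul (π.isBigO_comp _ l)
    _ = fun y => NormedSpace.normalize y - NormedSpace.normalize x := by simp only [one_smul]

lemma hausdorffMeasure_eq_mul_image_smul_sub {E : Type*} [NormedAddCommGroup E]
    [NormedSpace ℝ E] [MeasurableSpace E] [BorelSpace E] {d : ℝ} (hd : 0 ≤ d) (S : Set E) (x : E)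
    {r : ℝ} (hr : 0 < r) :
    μH[d] S = ENNReal.ofReal r ^ d * μH[d] ((fun y => r⁻¹ • (y - x)) '' S) := by
  have hscale := Measure.hausdorffMeasure_smul₀ hd hr.ne' ((fun y => r⁻¹ • (y - x)) '' S)
  have himage : r • (fun y => r⁻¹ • (y - x)) '' S = IsometryEquiv.subRight x '' S := by
    rw [← image_smul, image_image]
    exact image_congr fun y _ => smul_inv_smul₀ hr.ne' _
  rw [himage, IsometryEquiv.hausdorffMeasure_image] at hscale
  rw [hscale, ENNReal.smul_def, smul_eq_mul, ENNReal.coe_rpow_of_nonneg _ hd]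
  exact congrArg (· ^ d * _) (Real.enorm_of_nonneg hr.le)

lemma setIntegral_submodule_pos {E : Type*} [NormedAddCommGroup E] [NormedSpace ℝ E]
    [MeasurableSpace E] [BorelSpace E] {P : Submodule ℝ E} [FiniteDimensional ℝ P] {φ : E → ℝ}
    (hφ : Continuous φ) (hφ_supp : HasCompactSupport φ) (hφ_nonneg : 0 ≤ φ) {z : E} (hzP : z ∈ P)
    (hz : φ z ≠ 0) :
    0 < ∫ y in (P : Set E), φ y ∂μH[Module.finrank ℝ P] := by
  have hemb : Topology.IsClosedEmbedding ((↑) : P → E) :=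
    P.closed_of_finiteDimensional.isClosedEmbedding_subtypeVal
  have hmap : (μH[Module.finrank ℝ P]).restrict (P : Set E) =
      Measure.map ((↑) : P → E) μH[Module.finrank ℝ P] := by
    rw [isometry_subtype_coe.map_hausdorffMeasure (Or.inl (Nat.cast_nonneg _))]
    exact congrArg _ Subtype.range_coe.symm
  rw [hmap, hemb.measurableEmbedding.integral_map]
  exact Continuous.integral_pos_of_hasCompactSupport_nonneg_nonzero (x := ⟨z, hzP⟩)
    (hφ.comp continuous_subtype_val) (hφ_supp.comp_isClosedEmbedding hemb)
    (fun y => hφ_nonneg y) hz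

/-- The points of uniform lower `d`-density: `H^d(K ∩ B(x, r)) ≥ c r^d` at all scales `r < δ`. The
factor `c` is not normalized by the volume of the unit ball, and the points need not lie in `K`. -/
def lowerDensitySet {X : Type*} [MetricSpace X] [MeasurableSpace X] [BorelSpace X] (d : ℝ)
    (K : Set X) (c : ℝ≥0∞) (δ : ℝ) : Set X :=
  {x | ∀ r, 0 < r → r < δ → c * ENNReal.ofReal r ^ d ≤ μH[d] (K ∩ ball x r)}

lemma lowerDensitySet_subset_closure {X : Type*} [MetricSpace X] [MeasurableSpace X]
    [BorelSpace X] {d : ℝ} {K : Set X} {c : ℝ≥0∞} (hc : c ≠ 0) {δ : ℝ} (hδ : 0 < δ) :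
    lowerDensitySet d K c δ ⊆ closure K := by
  intro x hx
  refine Metric.mem_closure_iff.2 fun ε hε => ?_
  obtain ⟨r, hr, hrδε⟩ := exists_between (lt_min hδ hε)
  have hpos : 0 < μH[d] (K ∩ ball x r) :=
    (ENNReal.mul_pos hc (ENNReal.rpow_pos (ENNReal.ofReal_pos.2 hr) (by finiteness)).ne').trans_le
      (hx r hr (hrδε.trans_le (min_le_left _ _)))
  obtain ⟨y, hyK, hyx⟩ := nonempty_of_measure_ne_zero hpos.ne'
  exact ⟨y, hyK, (mem_ball'.1 hyx).trans (hrδε.trans_le (min_le_right _ _))⟩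

namespace ApproxTangentAt

variable {N : ℕ} {d : ℝ} {K : Set (Rn N)} {x : Rn N} {P : Submodule ℝ (Rn N)}

lemma eventually_integrableOn (hK : ApproxTangentAt N d K x P) (hP : Module.finrank ℝ P = d)
    {φ : Rn N → ℝ} (hφ : Continuous φ) (hφ_supp : HasCompactSupport φ) (hφ_nonneg : 0 ≤ φ) :
    ∀ᶠ r in 𝓝[>] (0 : ℝ), IntegrableOn φ ((fun y => r⁻¹ • (y - x)) '' K) μH[d] := by
  obtain ⟨χ, hχ_one, -, hχ_supp, hχ⟩ := exists_continuous_one_zero_of_isCompact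
    (isCompact_singleton (x := (0 : Rn N))) isClosed_empty (disjoint_empty _)
  have hψ : Continuous (φ + ⇑χ) := hφ.add χ.continuous
  have hψ_pos : 0 < ∫ y in (P : Set (Rn N)), (φ + ⇑χ) y ∂μH[d] := by
    subst hP
    refine setIntegral_submodule_pos hψ (hφ_supp.add hχ_supp)
      (fun y => add_nonneg (hφ_nonneg y) (hχ y).1) P.zero_mem ?_
    rw [Pi.add_apply, hχ_one rfl]
    exact (add_pos_of_nonneg_of_pos (hφ_nonneg 0) one_pos).ne'
  filter_upwards [(hK _ hψ (hφ_supp.add hχ_supp)).eventually_ne hψ_pos.ne'] with r hr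
  -- A nonzero Bochner integral forces integrability.
  refine (not_imp_comm.1 integral_undef hr).mono' hφ.aestronglyMeasurable
    (Eventually.of_forall fun y => ?_)
  rw [Real.norm_of_nonneg (hφ_nonneg y)]
  exact le_add_of_nonneg_right (hχ y).1

lemma tendsto_hausdorffMeasure_inter_isCompact (hK : ApproxTangentAt N d K x P)
    (hP : Module.finrank ℝ P = d) {A : Set (Rn N)} (hA : IsCompact A) (hAP : Disjoint A P) :
    Tendsto (fun r : ℝ => μH[d] ((fun y => r⁻¹ • (y - x)) '' K ∩ A)) (𝓝[>] 0) (𝓝 0) := by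
  obtain ⟨φ, hφA, hφP, hφ_supp, hφ⟩ :=
    exists_continuous_one_zero_of_isCompact hA P.closed_of_finiteDimensional hAP
  have hlim : Tendsto (fun r : ℝ =>
      ENNReal.ofReal (∫ y in (fun y => r⁻¹ • (y - x)) '' K, φ y ∂μH[d])) (𝓝[>] 0) (𝓝 0) := by
    have h := hK φ φ.continuous hφ_supp
    rw [setIntegral_eq_zero_of_forall_eq_zero hφP] at h
    simpa using ENNReal.tendsto_ofReal h
  refine tendsto_of_tendsto_of_tendsto_of_le_of_le' tendsto_const_nhds hlim
    (Eventually.of_forall fun _ => zero_le) ?_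
  filter_upwards [hK.eventually_integrableOn hP φ.continuous hφ_supp fun y => (hφ y).1] with r hr
  rw [ofReal_integral_eq_lintegral_ofReal hr (Eventually.of_forall fun y => (hφ y).1), inter_comm,
    ← Measure.restrict_apply hA.measurableSet, ← lintegral_indicator_one hA.measurableSet]
  refine lintegral_mono (indicator_le fun y hy => ?_)
  rw [hφA hy, Pi.one_apply, Pi.one_apply, ENNReal.ofReal_one]

lemma exists_le_hausdorffMeasure_inter_isOpen (hK : ApproxTangentAt N d K x P)
    (hP : Module.finrank ℝ P = d) {U : Set (Rn N)} (hU : IsOpen U)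
    (hUP : ((P : Set (Rn N)) ∩ U).Nonempty) :
    ∃ c : ℝ≥0∞, c ≠ 0 ∧
      ∀ᶠ r in 𝓝[>] (0 : ℝ), c ≤ μH[d] ((fun y => r⁻¹ • (y - x)) '' K ∩ U) := by
  obtain ⟨z, hzP, hzU⟩ := hUP
  obtain ⟨φ, hφz, hφU, hφ_supp, hφ⟩ := exists_continuous_one_zero_of_isCompact
    (isCompact_singleton (x := z)) hU.isClosed_compl (by simpa using hzU)
  have hpos : 0 < ∫ y in (P : Set (Rn N)), φ y ∂μH[d] := by
    subst hP
    exact setIntegral_submodule_pos φ.continuous hφ_supp (fun y => (hφ y).1) hzP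
      (by simp [hφz rfl])
  refine ⟨_, (ENNReal.ofReal_pos.2 (half_pos hpos)).ne', ?_⟩
  filter_upwards [(hK φ φ.continuous hφ_supp).eventually_const_lt (half_lt_self hpos)] with r hr
  refine (ENNReal.ofReal_le_ofReal hr.le).trans ?_
  rw [integral_eq_lintegral_of_nonneg_ae (Eventually.of_forall fun y => (hφ y).1)
    φ.continuous.aestronglyMeasurable, inter_comm, ← Measure.restrict_apply hU.measurableSet,
    ← lintegral_indicator_one hU.measurableSet]
  refine ENNReal.ofReal_toReal_le.trans (lintegral_mono fun y => ?_)
  by_cases hy : y ∈ U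
  · rw [indicator_of_mem hy, Pi.one_apply]
    exact ENNReal.ofReal_le_one.2 (hφ y).2
  · rw [hφU hy, Pi.zero_apply, ENNReal.ofReal_zero]
    exact zero_le

lemma exists_mem_lowerDensitySet (hK : ApproxTangentAt N d K x P) (hP : Module.finrank ℝ P = d) :
    ∃ n m : ℕ, x ∈ lowerDensitySet d K (n : ℝ≥0∞)⁻¹ (1 / (m + 1)) := by
  obtain ⟨c, hc, hcK⟩ := hK.exists_le_hausdorffMeasure_inter_isOpen hP
    (isOpen_ball (x := 0) (ε := 1)) ⟨0, P.zero_mem, mem_ball_self one_pos⟩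
  obtain ⟨δ, hδ, hδK⟩ := mem_nhdsGT_iff_exists_Ioo_subset.1 hcK
  obtain ⟨n, hn⟩ := ENNReal.exists_inv_nat_lt hc
  obtain ⟨m, hm⟩ := exists_nat_one_div_lt (mem_Ioi.1 hδ)
  refine ⟨n, m, fun r hr hrm => ?_⟩
  have hball : (fun y => r⁻¹ • (y - x)) ⁻¹' ball 0 1 = ball x r := by
    ext y
    rw [mem_preimage, mem_ball_zero_iff, norm_smul, norm_inv, Real.norm_of_nonneg hr.le,
      inv_mul_lt_one₀ hr, mem_ball, dist_eq_norm]
  rw [hausdorffMeasure_eq_mul_image_smul_sub (hP ▸ Nat.cast_nonneg _) _ x hr, ← hball,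
    image_inter_preimage, mul_comm]
  gcongr
  exact hn.le.trans (hδK ⟨hr, hrm.trans hm⟩)

lemma eventually_hausdorffMeasure_lt (hK : ApproxTangentAt N d K x P)
    (hP : Module.finrank ℝ P = d) {A : Rn N →L[ℝ] ℝ} (hAP : ∀ z ∈ P, A z = 0) {ε : ℝ}
    (hε : 0 < ε) (R : ℝ) {c : ℝ≥0∞} (hc : c ≠ 0) :
    ∀ᶠ r in 𝓝[>] (0 : ℝ),
      μH[d] (K ∩ {y | ‖y - x‖ ≤ R * r ∧ ε * r ≤ |A (y - x)|}) < c * ENNReal.ofReal r ^ d := by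
  set B : Set (Rn N) := closedBall 0 R ∩ {z | ε ≤ |A z|}
  have hB : IsCompact B := (isCompact_closedBall 0 R).inter_right
    (isClosed_le continuous_const A.continuous.abs)
  have hBP : Disjoint B P :=
    disjoint_left.2 fun z hz hzP => hε.not_ge (by simpa [hAP z hzP] using hz.2)
  filter_upwards [(hK.tendsto_hausdorffMeasure_inter_isCompact hP hB hBP).eventually_lt_const
    (pos_iff_ne_zero.2 hc), self_mem_nhdsWithin] with r hrc (hr : 0 < r)
  have hpre : (fun y => r⁻¹ • (y - x)) ⁻¹' B =
      {y | ‖y - x‖ ≤ R * r ∧ ε * r ≤ |A (y - x)|} := by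
    ext y
    simp [B, norm_smul, abs_mul, abs_of_pos hr, inv_mul_le_iff₀ hr, le_inv_mul_iff₀ hr, mul_comm r]
  rw [hausdorffMeasure_eq_mul_image_smul_sub (hP ▸ Nat.cast_nonneg _) _ x hr, ← hpre,
    image_inter_preimage, mul_comm]
  gcongr
  finiteness

lemma isLittleO_map_sub (hK : ApproxTangentAt N d K x P) (hP : Module.finrank ℝ P = d)
    {A : Rn N →L[ℝ] ℝ} (hAP : ∀ z ∈ P, A z = 0) {c : ℝ≥0∞} (hc : c ≠ 0) {δ : ℝ} (hδ : 0 < δ) :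
    (fun y => A (y - x)) =o[𝓝[lowerDensitySet d K c δ] x] (· - x) := by
  have hd : 0 ≤ d := hP ▸ Nat.cast_nonneg _
  refine isLittleO_iff.2 fun ε hε => ?_
  obtain ⟨τ, ⟨hτ, hτ_one⟩, hAτ⟩ : ∃ τ : ℝ, (0 < τ ∧ τ < 1) ∧ ‖A‖ * τ < ε / 2 := by
    have hlim : Tendsto (fun τ : ℝ => ‖A‖ * τ) (𝓝[>] 0) (𝓝 0) :=
      ((continuous_const_mul ‖A‖).tendsto' 0 0 (mul_zero _)).mono_left nhdsWithin_le_nhds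
    exact nonempty_of_mem
      (inter_mem (Ioo_mem_nhdsGT one_pos) (hlim.eventually_lt_const (half_pos hε)))
  have hsmall := hK.eventually_hausdorffMeasure_lt hP hAP (half_pos hε) 2
    (c := c * ENNReal.ofReal τ ^ d)
    (mul_ne_zero hc (ENNReal.rpow_pos (ENNReal.ofReal_pos.2 hτ) (by finiteness)).ne')
  have hev := (tendsto_norm_sub_self_nhdsNE x).eventually (hsmall.and (Ioo_mem_nhdsGT hδ))
  filter_upwards [nhdsWithin_le_nhds (eventually_nhdsWithin_iff.1 hev), self_mem_nhdsWithin]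
    with y hy hyd
  obtain rfl | hyx := eq_or_ne y x
  · simp
  obtain ⟨hlt, hr, hrδ⟩ := hy hyx
  by_contra! hAy
  rw [Real.norm_eq_abs] at hAy
  have hball : ball y (τ * ‖y - x‖) ⊆
      {z | ‖z - x‖ ≤ 2 * ‖y - x‖ ∧ ε / 2 * ‖y - x‖ ≤ |A (z - x)|} := by
    intro z hz
    rw [mem_ball, dist_eq_norm] at hz
    have hAz : |A (y - x)| - |A (z - x)| ≤ ‖A‖ * (τ * ‖y - x‖) := calc
      _ ≤ |A (y - x) - A (z - x)| := abs_sub_abs_le_abs_sub _ _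
      _ = ‖A (z - y)‖ := by
        rw [← map_sub, sub_sub_sub_cancel_right, ← neg_sub z y, map_neg, abs_neg, Real.norm_eq_abs]
      _ ≤ ‖A‖ * (τ * ‖y - x‖) := A.le_opNorm_of_le hz.le
    exact ⟨by nlinarith [norm_sub_le_norm_sub_add_norm_sub z y x], by nlinarith⟩
  have hle := hyd (τ * ‖y - x‖) (by positivity) (by nlinarith)
  rw [ENNReal.ofReal_mul hτ.le, ENNReal.mul_rpow_of_nonneg _ _ hd, ← mul_assoc] at hle
  exact (hle.trans (measure_mono (inter_subset_inter_right K hball))).not_gt hlt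

end ApproxTangentAt

lemma ApproxTangentAt.isBigO_dist_normalize {N : ℕ} {d : ℝ} {K : Set (Rn N)} {x : Rn N}
    {P : Submodule ℝ (Rn N)} (hK : ApproxTangentAt N d K x P) (hP : Module.finrank ℝ P = d)
    (hxP : x ∉ P) {c : ℝ≥0∞} (hc : c ≠ 0) {δ : ℝ} (hδ : 0 < δ) :
    (dist · x) =O[𝓝[lowerDensitySet d K c δ] x]
      fun y => dist (NormedSpace.normalize y) (NormedSpace.normalize x) := by
  obtain ⟨A, hAx, hPA⟩ := P.exists_le_ker_of_notMem hxP
  simp only [dist_eq_norm, isBigO_norm_norm]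
  exact isBigO_sub_normalize_sub nhdsWithin_le_nhds A.toContinuousLinearMap hAx
    (hK.isLittleO_map_sub hP (fun z hz => LinearMap.mem_ker.1 (hPA hz)) hc hδ)

lemma ae_mem_of_approxTangentAt {N : ℕ} {d : ℝ} (hd : 0 ≤ d) {K : Set (Rn N)}
    (hK : μH[d] (NormedSpace.normalize '' (closure K \ {0})) = 0) :
    ∀ᵐ x ∂μH[d], ∀ P : Submodule ℝ (Rn N), Module.finrank ℝ P = d →
      ApproxTangentAt N d K x P → x ∈ P := by
  let D (n m : ℕ) : Set (Rn N) := lowerDensitySet d K (n : ℝ≥0∞)⁻¹ (1 / (m + 1))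
  let T (n m : ℕ) : Set (Rn N) := {x ∈ D n m | ∃ P : Submodule ℝ (Rn N),
    Module.finrank ℝ P = d ∧ ApproxTangentAt N d K x P ∧ x ∉ P}
  have hT (n m : ℕ) : μH[d] (T n m) = 0 := by
    have hn : (n : ℝ≥0∞)⁻¹ ≠ 0 := ENNReal.inv_ne_zero.2 (ENNReal.natCast_ne_top n)
    refine hausdorffMeasure_eq_zero_of_isBigO_dist (f := NormedSpace.normalize) hd ?_
      (measure_mono_null (image_mono ?_) hK)
    · rintro x ⟨-, P, hP, hxK, hxP⟩
      exact (hxK.isBigO_dist_normalize hP hxP hn (by positivity)).mono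
        (nhdsWithin_mono x (sep_subset _ _))
    · rintro x ⟨hxD, P, -, -, hxP⟩
      refine ⟨lowerDensitySet_subset_closure hn (by positivity) hxD, ?_⟩
      rintro rfl
      exact hxP P.zero_mem
  refine measure_mono_null ?_ (measure_iUnion_null fun n => measure_iUnion_null (hT n))
  intro x hx
  simp only [mem_compl_iff, mem_ofPred_eq, not_forall] at hx
  obtain ⟨P, hP, hxK, hxP⟩ := hx
  obtain ⟨n, m, hxD⟩ := hxK.exists_mem_lowerDensitySet hP
  exact mem_iUnion₂.2 ⟨n, m, hxD, P, hP, hxK, hxP⟩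

lemma normalize_mem_inter_sphere {E : Type*} [NormedAddCommGroup E] [NormedSpace ℝ E] {C : Set E}
    (hcone : ∀ t : ℝ, 0 ≤ t → ∀ x ∈ C, t • x ∈ C) {x : E} (hx : x ∈ C) (hx0 : x ≠ 0) :
    NormedSpace.normalize x ∈ C ∩ sphere 0 1 :=
  ⟨hcone _ (by positivity) x hx,
    mem_sphere_zero_iff_norm.2 (NormedSpace.norm_normalize_eq_one_iff.2 hx0)⟩

theorem statement5_general {N k : ℕ} {C : Set (Rn N)} (hC : IsClosed C)
    (hcone : ∀ t : ℝ, 0 ≤ t → ∀ x ∈ C, t • x ∈ C)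
    (hrect : KRectifiable N k (C ∩ sphere (0 : Rn N) 1)) {K : Set (Rn N)} (hKC : K ⊆ C) :
    KRectifiable N (k + 1) K ∧
    ∀ᵐ x ∂μH[(k : ℝ) + 1], ∀ P : Submodule ℝ (Rn N), Module.finrank ℝ P = k + 1 →
      ApproxTangentAt N ((k : ℝ) + 1) K x P → x ∈ P := by
  constructor
  · refine hrect.univ_smul.of_hausdorffMeasure_diff_eq_zero ?_
    have hdiff : K \ (univ : Set ℝ) • (C ∩ sphere (0 : Rn N) 1) ⊆ {0} := by
      rintro x ⟨hxK, hx⟩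
      by_contra hx0
      rw [← NormedSpace.norm_smul_normalize x] at hx
      exact hx (smul_mem_smul (mem_univ _) (normalize_mem_inter_sphere hcone (hKC hxK) hx0))
    have := Measure.nullSingletonClass_hausdorff (Rn N) (d := (k + 1 : ℕ)) (by positivity)
    exact measure_mono_null hdiff (measure_singleton 0)
  · have hlink : NormedSpace.normalize '' (closure K \ {0}) ⊆ C ∩ sphere (0 : Rn N) 1 := by
      rintro _ ⟨x, ⟨hxK, hx0⟩, rfl⟩
      exact normalize_mem_inter_sphere hcone (closure_minimal hKC hC hxK) hx0
    filter_upwards [ae_mem_of_approxTangentAt (by positivity)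
      (measure_mono_null hlink (hrect.hausdorffMeasure_eq_zero (lt_add_one _)))] with x hx P hP
    exact hx P (by exact_mod_cast hP)

/-- Let `N ≥ 3` and let `C ⊆ ℝ^N` be a closed cone (`tC ⊆ C` for all
`t ≥ 0`) with `C ∩ S^{N-1}` `(N-2)`-rectifiable of finite `H^{N-2}` measure, and let
`K ⊆ C` be closed. Then `K` is `(N-1)`-rectifiable and, for `H^{N-1}`-a.e. `x ∈ K`,
every `(N-1)`-dimensional approximate tangent plane of `K` at `x` contains `x`. -/
theorem statement5 {N : ℕ} (hN : 3 ≤ N) (C : Set (Rn N)) (hCc : IsClosed C)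
    (hcone : ∀ t : ℝ, 0 ≤ t → ∀ x ∈ C, t • x ∈ C)
    (hrect : KRectifiable N (N - 2) (C ∩ sphere (0 : Rn N) 1))
    (hfin : μH[(N : ℝ) - 2] (C ∩ sphere (0 : Rn N) 1) < ⊤)
    (K : Set (Rn N)) (hK : IsClosed K) (hKC : K ⊆ C) :
    KRectifiable N (N - 1) K ∧
    ∀ᵐ x ∂(μH[(N : ℝ) - 1]).restrict K,
      ∀ P : Submodule ℝ (Rn N), Module.finrank ℝ P = N - 1 →
        ApproxTangentAt N ((N : ℝ) - 1) K x P → x ∈ P := by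
  obtain ⟨k, rfl⟩ : ∃ k, N = k + 2 := ⟨N - 2, by lia⟩
  rw [show ((k + 2 : ℕ) : ℝ) - 1 = k + 1 by push_cast; ring]
  exact (statement5_general hCc hcone hrect hKC).imp_right ae_restrict_of_ae
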